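/- arXiv:1508.00822 — 5 statements merged into one kernel-verified Lean document; each statement's English description precedes it below -/
import Mathlib

section
/- Let M be a compact topological space, μ a finite Borel measure on M with 0 < μ(M) < ∞, and ψ : M × M → ℝ a continuous negative definite kernel. Define K̃(x,y) := (1/(2μ(M))) ∫_M [ψ(x,u) + ψ(y,u) − ψ(x,y)] dμ(u). Then K̃ is a positive definite kernel on M. -/
/-!
For each fixed `u`, the kernel `(x, y) ↦ ψ x u + ψ y u - ψ x y` is positive definite: apply negative
definiteness of `ψ` to the points `u, x₁, …, xₙ` with weights `-∑ αᵢ, α₁, …, αₙ`, which sum to zero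
(`IsNegDefKernel.sum_shifted_nonneg`). All integrands are continuous on a compact space, hence
integrable for a finite measure, so the quadratic form of the averaged kernel is a nonnegative
multiple of the integral over `u` of these nonnegative quadratic forms.
-/

open Finset MeasureTheory

/-- A kernel `K : M × M → ℝ` is positive definite if it is symmetric and
`∑ᵢⱼ αᵢ αⱼ K(xᵢ,xⱼ) ≥ 0` for all finite families. -/
def IsPosDefKernel {M : Type*} (K : M → M → ℝ) : Prop :=
  (∀ x y, K x y = K y x) ∧
    ∀ (n : ℕ) (x : Fin n → M) (α : Fin n → ℝ),
      0 ≤ ∑ i, ∑ j, α i * α j * K (x i) (x j)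

/-- A kernel `ψ : M × M → ℝ` is negative definite if it is symmetric, vanishes on the
diagonal, and `∑ᵢⱼ αᵢ αⱼ ψ(xᵢ,xⱼ) ≤ 0` whenever `∑ᵢ αᵢ = 0`. -/
def IsNegDefKernel {M : Type*} (ψ : M → M → ℝ) : Prop :=
  (∀ x y, ψ x y = ψ y x) ∧ (∀ x, ψ x x = 0) ∧
    ∀ (n : ℕ) (x : Fin n → M) (α : Fin n → ℝ), (∑ i, α i) = 0 →
      ∑ i, ∑ j, α i * α j * ψ (x i) (x j) ≤ 0

/-- Negative definiteness at the points `u, x₁, …, xₙ`, with the weight `-∑ αᵢ` at `u` chosen to make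
the total weight zero. -/
lemma IsNegDefKernel.sum_shifted_nonneg {M : Type*} {ψ : M → M → ℝ} (hψ : IsNegDefKernel ψ)
    (u : M) (n : ℕ) (x : Fin n → M) (α : Fin n → ℝ) :
    0 ≤ ∑ i, ∑ j, α i * α j * (ψ (x i) u + ψ (x j) u - ψ (x i) (x j)) := by
  obtain ⟨hsymm, hdiag, hneg⟩ := hψ
  have h := hneg (n + 1) (Fin.cons u x) (Fin.cons (-∑ i, α i) α) (by simp [Fin.sum_univ_succ])
  simp only [Fin.sum_univ_succ, Fin.cons_zero, Fin.cons_succ, hdiag, mul_zero, zero_add,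
    Finset.sum_add_distrib] at h
  have hrow (s : ℝ) : ∑ j, -s * α j * ψ u (x j) = -(s * ∑ j, α j * ψ (x j) u) := by
    rw [Finset.mul_sum, ← Finset.sum_neg_distrib]
    refine Finset.sum_congr rfl fun j _ => ?_
    rw [hsymm u (x j)]; ring
  have hcol (s : ℝ) : ∑ j, α j * -s * ψ (x j) u = -(s * ∑ j, α j * ψ (x j) u) := by
    rw [Finset.mul_sum, ← Finset.sum_neg_distrib]
    exact Finset.sum_congr rfl fun j _ => by ring
  have hexpand : ∑ i, ∑ j, α i * α j * (ψ (x i) u + ψ (x j) u - ψ (x i) (x j)) =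
      (∑ j, α j * ψ (x j) u) * (∑ i, α i) + (∑ i, α i) * (∑ j, α j * ψ (x j) u)
        - ∑ i, ∑ j, α i * α j * ψ (x i) (x j) := by
    rw [Finset.sum_mul_sum, Finset.sum_mul_sum]
    simp only [← Finset.sum_add_distrib, ← Finset.sum_sub_distrib]
    exact Finset.sum_congr rfl fun i _ => Finset.sum_congr rfl fun j _ => by ring
  rw [hrow, hcol] at h
  rw [hexpand]
  linarith

theorem averaged_kernel_posDef {M : Type*} [TopologicalSpace M] [CompactSpace M]
    [MeasurableSpace M] [BorelSpace M]
    (μ : Measure M) [IsFiniteMeasure μ] (hμ : 0 < μ Set.univ)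
    (ψ : M → M → ℝ) (hcont : Continuous fun p : M × M => ψ p.1 p.2)
    (hψ : IsNegDefKernel ψ) :
    IsPosDefKernel
      (fun x y => (1 / (2 * (μ Set.univ).toReal)) *
        ∫ u, (ψ x u + ψ y u - ψ x y) ∂μ) := by
  have hint : ∀ x y, Integrable (fun u => ψ x u + ψ y u - ψ x y) μ := by
    intro x y
    have hc : ∀ z, Continuous fun u => ψ z u := fun z =>
      hcont.comp (continuous_const.prodMk continuous_id)
    have hf : Continuous fun u => ψ x u + ψ y u - ψ x y :=
      ((hc x).add (hc y)).sub continuous_const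
    obtain ⟨C, hC⟩ := isCompact_univ.exists_bound_of_continuousOn hf.continuousOn
    exact Integrable.of_bound hf.aestronglyMeasurable C
      (Filter.Eventually.of_forall fun u => hC u (Set.mem_univ u))
  refine ⟨fun x y => ?_, fun n x α => ?_⟩
  · simp only [hψ.1 x y, add_comm (ψ x _)]
  · have key : ∑ i, ∑ j, α i * α j * ((1 / (2 * (μ Set.univ).toReal)) *
          ∫ u, (ψ (x i) u + ψ (x j) u - ψ (x i) (x j)) ∂μ) =
        (1 / (2 * (μ Set.univ).toReal)) *
          ∫ u, ∑ i, ∑ j, α i * α j * (ψ (x i) u + ψ (x j) u - ψ (x i) (x j)) ∂μ := by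
      rw [integral_finsetSum _ fun i _ => integrable_finsetSum _ fun j _ =>
        (hint (x i) (x j)).const_mul _, Finset.mul_sum]
      refine Finset.sum_congr rfl fun i _ => ?_
      rw [integral_finsetSum _ fun j _ => (hint (x i) (x j)).const_mul _, Finset.mul_sum]
      refine Finset.sum_congr rfl fun j _ => ?_
      rw [integral_const_mul]
      ring
    change 0 ≤ ∑ i, ∑ j, α i * α j * ((1 / (2 * (μ Set.univ).toReal)) *
          ∫ u, (ψ (x i) u + ψ (x j) u - ψ (x i) (x j)) ∂μ)
    rw [key]
    exact mul_nonneg (by positivity)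
      (integral_nonneg fun u => hψ.sum_shifted_nonneg u n x α)
end

section
/- Let M be a compact metric space, μ a finite Borel measure on M with 0 < μ(M) < ∞ and with support equal to M, and ψ : M × M → ℝ a continuous negative definite kernel. Define K̃(x,y) := (1/(2μ(M))) ∫_M [ψ(x,u) + ψ(y,u) − ψ(x,y)] dμ(u). Then the following are equivalent: (i) there exists z ∈ M such that K̃(z,z) = 0; (ii) K̃(x,y) = 0 for all x,y ∈ M; (iii) ψ(x,y) = 0 for all x,y ∈ M. -/
/-!
Since `ψ` vanishes on the diagonal, `K̃(z,z)` is the `μ`-average of `ψ(z,·)`. A negative definite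
kernel is nonnegative, so `K̃(z,z) = 0` together with continuity and full support forces
`ψ(z,·) = 0` identically. The inequality `ψ(x,y) ≤ 2 (ψ(z,x) + ψ(z,y))`
(`IsNegDefKernel.le_two_mul_add`) then gives `ψ = 0` everywhere. The remaining implications are
immediate, `M` being nonempty because `μ(M) > 0`.
-/

open Finset MeasureTheory

/-- Negative definiteness at the two points `x, y` with weights `1, -1`. -/
lemma IsNegDefKernel.nonneg {M : Type*} {ψ : M → M → ℝ} (h : IsNegDefKernel ψ) (x y : M) :
    0 ≤ ψ x y := by
  obtain ⟨hs, hd, hn⟩ := h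
  have := hn 2 ![x, y] ![1, -1] (by simp)
  simp [Fin.sum_univ_two, hd, hs y x] at this
  linarith

/-- A relaxed triangle inequality: negative definiteness at `x, y, z` with
weights `1, 1, -2`. -/
lemma IsNegDefKernel.le_two_mul_add {M : Type*} {ψ : M → M → ℝ} (h : IsNegDefKernel ψ)
    (x y z : M) : ψ x y ≤ 2 * (ψ z x + ψ z y) := by
  obtain ⟨hs, hd, hn⟩ := h
  have := hn 3 ![x, y, z] ![1, 1, -2] (by simp [Fin.sum_univ_three]; norm_num)
  simp [Fin.sum_univ_three, hd, hs y x, hs x z, hs y z] at this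
  linarith

theorem averaged_kernel_degenerate_iff {M : Type*} [MetricSpace M] [CompactSpace M]
    [MeasurableSpace M] [BorelSpace M]
    (μ : Measure M) [IsFiniteMeasure μ] (hμ : 0 < μ Set.univ)
    (hsupp : ∀ U : Set M, IsOpen U → U.Nonempty → 0 < μ U)
    (ψ : M → M → ℝ) (hcont : Continuous fun p : M × M => ψ p.1 p.2)
    (hψ : IsNegDefKernel ψ)
    (Ktilde : M → M → ℝ)
    (hKt : ∀ x y, Ktilde x y = (1 / (2 * (μ Set.univ).toReal)) *
      ∫ u, (ψ x u + ψ y u - ψ x y) ∂μ) :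
    ((∃ z : M, Ktilde z z = 0) ↔ (∀ x y : M, Ktilde x y = 0)) ∧
      ((∀ x y : M, Ktilde x y = 0) ↔ (∀ x y : M, ψ x y = 0)) := by
  have hpos : 0 < (μ Set.univ).toReal := ENNReal.toReal_pos hμ.ne' (measure_ne_top μ _)
  have : μ.IsOpenPosMeasure := ⟨fun U hU hne => (hsupp U hU hne).ne'⟩
  obtain ⟨z₀, -⟩ : (Set.univ : Set M).Nonempty := nonempty_of_measure_ne_zero hμ.ne'
  have key : (∃ z : M, Ktilde z z = 0) → ∀ x y : M, ψ x y = 0 := by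
    rintro ⟨z, hz⟩ x y
    have hc : Continuous fun u => ψ z u + ψ z u - ψ z z := by
      have : Continuous fun u => ψ z u :=
        hcont.comp (continuous_const.prodMk continuous_id)
      fun_prop
    have hint : ∫ u, (ψ z u + ψ z u - ψ z z) ∂μ = 0 := by
      rw [hKt] at hz
      exact (mul_eq_zero.mp hz).resolve_left (by positivity)
    have hnn : 0 ≤ fun u => ψ z u + ψ z u - ψ z z := fun u => by
      have := hψ.nonneg z u
      simp only [Pi.zero_apply, hψ.2.1]
      linarith
    have hzero : (fun u => ψ z u + ψ z u - ψ z z) = 0 := by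
      by_contra hne
      exact (hc.integral_pos_of_hasCompactSupport_nonneg_nonzero
        (HasCompactSupport.of_compactSpace _) hnn
        (Function.ne_iff.mp hne).choose_spec).ne' hint
    have hψz : ∀ u, ψ z u = 0 := fun u => by
      have := congrFun hzero u
      simp only [Pi.zero_apply, hψ.2.1] at this
      linarith
    have h₁ := hψ.le_two_mul_add x y z
    rw [hψz, hψz] at h₁
    linarith [hψ.nonneg x y]
  have back : (∀ x y : M, ψ x y = 0) → ∀ x y : M, Ktilde x y = 0 := fun h x y => by
    simp [hKt, h]
  exact ⟨⟨fun h => back (key h), fun h => ⟨z₀, h z₀ z₀⟩⟩,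
    ⟨fun h => key ⟨z₀, h z₀ z₀⟩, back⟩⟩
end

section
/- Define d_c(x,y) := min(|x − y|, 2 − |x − y|) for x, y ∈ [−1,1]. Then the kernel K(x,y) := 1/2 − d_c(x,y) is positive definite on [−1,1]: for every n ∈ ℕ, all x_1,…,x_n ∈ [−1,1] and all α_1,…,α_n ∈ ℝ one has Σ_{i,j=1}^n α_i α_j K(x_i,x_j) ≥ 0. -/
/-!
Antipodal points of the circle `ℝ/2ℤ` differ by `1`, so every point is `u` or its antipode, with `u ∈ [0,1]` a
representative modulo the antipodal map. Passing to the antipode replaces the distance `d` by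
`1 - d`, hence changes the sign of `1/2 - d`; so the kernel is `ε ε' (1/2 - |u - v|)`
(`circle_kernel_eq`), and the signs can be absorbed into the coefficients. On `[0,1]` the kernel
`1/2 - |u - v|` is the Gram kernel of step functions: with `e_u = -1` on `(0,u]` and `1` elsewhere,
the product `e_u e_v` is `-1` exactly between `u` and `v`, so `∫₀¹ e_u e_v = 1 - 2|u - v|`
(`step_mul_integral`). The quadratic form is therefore half the integral of a square.
-/

open Finset

/-- The step function equal to `-1` on `(0,u]` and to `1` elsewhere. -/
noncomputable def circleStep (u t : ℝ) : ℝ := if 0 < t ∧ t ≤ u then -1 else 1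

/-- The representative in `[0,1]` of the point `x ∈ [-1,1]` modulo the antipodal map. -/
noncomputable def circleRep (x : ℝ) : ℝ := if 0 ≤ x then x else x + 1

/-- The sign telling whether `x` is its own representative `circleRep x` or the antipode of it. -/
noncomputable def circleSign (x : ℝ) : ℝ := if 0 ≤ x then 1 else -1

lemma circleRep_mem {x : ℝ} (hx : x ∈ Set.Icc (-1 : ℝ) 1) : circleRep x ∈ Set.Icc (0 : ℝ) 1 := by
  obtain ⟨h1, h2⟩ := hx
  unfold circleRep
  split_ifs with h
  · exact ⟨h, h2⟩
  · constructor <;> linarith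

lemma circle_kernel_eq {x y : ℝ} (hx : x ∈ Set.Icc (-1 : ℝ) 1) (hy : y ∈ Set.Icc (-1 : ℝ) 1) :
    1 / 2 - min |x - y| (2 - |x - y|)
      = circleSign x * circleSign y * (1 / 2 - |circleRep x - circleRep y|) := by
  obtain ⟨hx1, hx2⟩ := hx
  obtain ⟨hy1, hy2⟩ := hy
  unfold circleRep circleSign
  split_ifs with h1 h2 h2 <;>
    rcases min_cases |x - y| (2 - |x - y|) with ⟨h, h'⟩ | ⟨h, h'⟩ <;> rw [h] <;> grind

lemma step_mul_integral_of_le {u v : ℝ} (hu : 0 ≤ u) (huv : u ≤ v) (hv : v ≤ 1) :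
    MeasureTheory.IntegrableOn (fun t => circleStep u t * circleStep v t) (Set.Ioc 0 1) ∧
      ∫ t in Set.Ioc (0 : ℝ) 1, circleStep u t * circleStep v t = 1 - 2 * (v - u) := by
  have key : (fun t => circleStep u t * circleStep v t)
      = fun t => 1 - 2 * (Set.Ioc u v).indicator (fun _ => (1 : ℝ)) t := by
    funext t
    simp only [circleStep, Set.indicator, Set.mem_Ioc]
    grind
  have hi : MeasureTheory.Integrable
      (fun t => 2 * (Set.Ioc u v).indicator (fun _ => (1 : ℝ)) t)
      (MeasureTheory.volume.restrict (Set.Ioc (0 : ℝ) 1)) :=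
    ((MeasureTheory.integrable_const (1 : ℝ)).indicator measurableSet_Ioc).const_mul 2
  rw [key]
  refine ⟨(MeasureTheory.integrable_const (1 : ℝ)).sub hi, ?_⟩
  rw [MeasureTheory.integral_sub (MeasureTheory.integrable_const (1 : ℝ)) hi,
    MeasureTheory.integral_const_mul, MeasureTheory.setIntegral_indicator measurableSet_Ioc,
    Set.inter_eq_right.mpr (Set.Ioc_subset_Ioc hu hv)]
  simp [huv]

lemma step_mul_integral {u v : ℝ} (hu : u ∈ Set.Icc (0 : ℝ) 1) (hv : v ∈ Set.Icc (0 : ℝ) 1) :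
    MeasureTheory.IntegrableOn (fun t => circleStep u t * circleStep v t) (Set.Ioc 0 1) ∧
      ∫ t in Set.Ioc (0 : ℝ) 1, circleStep u t * circleStep v t = 1 - 2 * |u - v| := by
  rcases le_total u v with h | h
  · rw [abs_sub_comm, abs_of_nonneg (sub_nonneg.mpr h)]
    exact step_mul_integral_of_le hu.1 h hv.2
  · rw [abs_of_nonneg (sub_nonneg.mpr h)]
    simp_rw [mul_comm (circleStep u _)]
    exact step_mul_integral_of_le hv.1 h hu.2

theorem circle_kernel_posDef (n : ℕ) (x : Fin n → ℝ)
    (hx : ∀ i, x i ∈ Set.Icc (-1 : ℝ) 1) (α : Fin n → ℝ) :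
    0 ≤ ∑ i, ∑ j, α i * α j *
      (1 / 2 - min |x i - x j| (2 - |x i - x j|)) := by
  set β : Fin n → ℝ := fun i => α i * circleSign (x i) with hβ
  set u : Fin n → ℝ := fun i => circleRep (x i) with hu
  have hI := fun i j => step_mul_integral (circleRep_mem (hx i)) (circleRep_mem (hx j))
  have hsum : ∑ i, ∑ j, α i * α j * (1 / 2 - min |x i - x j| (2 - |x i - x j|))
      = 1 / 2 * ∫ t in Set.Ioc (0 : ℝ) 1, (∑ i, β i * circleStep (u i) t) ^ 2 := by
    have hsq : ∀ t, (∑ i, β i * circleStep (u i) t) ^ 2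
        = ∑ i, ∑ j, β i * β j * (circleStep (u i) t * circleStep (u j) t) := by
      intro t
      rw [sq, Finset.sum_mul_sum]
      exact Finset.sum_congr rfl fun i _ => Finset.sum_congr rfl fun j _ => by ring
    simp_rw [hsq]
    rw [MeasureTheory.integral_finsetSum _ fun i _ =>
      MeasureTheory.integrable_finsetSum _ fun j _ => (hI i j).1.const_mul _, Finset.mul_sum]
    refine Finset.sum_congr rfl fun i _ => ?_
    rw [MeasureTheory.integral_finsetSum _ fun j _ => (hI i j).1.const_mul _, Finset.mul_sum]
    refine Finset.sum_congr rfl fun j _ => ?_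
    rw [MeasureTheory.integral_const_mul, (hI i j).2, circle_kernel_eq (hx i) (hx j)]
    simp only [hβ]
    ring
  rw [hsum]
  exact mul_nonneg (by norm_num) (MeasureTheory.integral_nonneg fun t => sq_nonneg _)
end

section
/- Let 0 < α ≤ 1 and define ψ_α(x,y) := (min(|x − y|, 2 − |x − y|))^α for x,y ∈ [−1,1]. Then ψ_α is a negative definite kernel on [−1,1]. -/
/-!
The distance `d` on the circle `ℝ/2ℤ` takes values in `[0, 1]`. For `0 ≤ r ≤ 1` two arcs of length
`r` starting at `x` and `y` overlap in a set of length `max 0 (r - d x y)`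
(`arc_overlap`), and overlap lengths form a positive semidefinite kernel because they are `L²`
inner products of indicator functions (`interval_overlap_psd`). As
`min (d x y) r = r - max 0 (r - d x y)`, every truncated distance `min d r` is negative definite
(`min_negDef`).

The concave function `t ↦ t ^ a` is a nonnegative mixture of truncations on `[0, 1]`:
`t ^ a = a (1 - a) ∫₀¹ min t r * r ^ (a - 2) dr + a * t` (`rpow_mixture`), so negative definiteness
passes from the kernels `min d r`, `0 ≤ r ≤ 1`, to `d ^ a`.
-/

open Finset

/-- The length of the intersection of two half-open intervals is a positive semidefinite kernel:
the quadratic form is the integral of the square of a step function. -/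
lemma interval_overlap_psd {ι : Type*} [Fintype ι] (u v c : ι → ℝ) :
    0 ≤ ∑ i, ∑ j, c i * c j * max 0 (min (v i) (v j) - max (u i) (u j)) := by
  have key : ∀ i j, MeasureTheory.Integrable (fun t : ℝ =>
        c i * c j * (Set.Ioc (max (u i) (u j)) (min (v i) (v j))).indicator (fun _ => (1 : ℝ)) t) ∧
      ∫ t : ℝ, c i * c j *
          (Set.Ioc (max (u i) (u j)) (min (v i) (v j))).indicator (fun _ => (1 : ℝ)) t
        = c i * c j * max 0 (min (v i) (v j) - max (u i) (u j)) := by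
    intro i j
    refine ⟨((MeasureTheory.integrable_indicator_iff measurableSet_Ioc).2
      (MeasureTheory.integrableOn_const (by simp))).const_mul _, ?_⟩
    rw [MeasureTheory.integral_const_mul, MeasureTheory.integral_indicator measurableSet_Ioc]
    simp [MeasureTheory.Measure.real, Real.volume_Ioc, ENNReal.toReal_ofReal', max_comm]
  have h : ∑ i, ∑ j, c i * c j * max 0 (min (v i) (v j) - max (u i) (u j))
      = ∫ t : ℝ, (∑ i, c i * (Set.Ioc (u i) (v i)).indicator (fun _ => (1 : ℝ)) t) ^ 2 := by
    simp_rw [← fun i j => (key i j).2]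
    simp_rw [← MeasureTheory.integral_finsetSum _ (fun j _ => (key _ j).1)]
    rw [← MeasureTheory.integral_finsetSum _
      (fun i _ => MeasureTheory.integrable_finsetSum _ (fun j _ => (key i j).1))]
    congr 1
    ext t
    rw [sq, Finset.sum_mul_sum]
    refine Finset.sum_congr rfl fun i _ => Finset.sum_congr rfl fun j _ => ?_
    rw [← Set.Ioc_inter_Ioc, Set.indicator_apply, Set.indicator_apply, Set.indicator_apply]
    by_cases h1 : t ∈ Set.Ioc (u i) (v i) <;> by_cases h2 : t ∈ Set.Ioc (u j) (v j) <;>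
      simp [-Set.mem_Ioc, h1, h2]
  rw [h]
  exact MeasureTheory.integral_nonneg fun t => sq_nonneg _

/-- The overlap length of the arcs `(x, x + r]` and `(y, y + r]` in `ℝ/2ℤ` (both sides vanish for
`r ≤ 0`). In the fundamental domain `(-1, 1]` an arc is represented by its translates by `0` and
`-2`, cut off at `-1` and `1`. -/
lemma arc_overlap {x y r : ℝ} (hx : x ∈ Set.Icc (-1 : ℝ) 1) (hy : y ∈ Set.Icc (-1 : ℝ) 1)
    (hr1 : r ≤ 1) :
    ∑ p : Fin 2, ∑ q : Fin 2, max 0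
      (min (min (x - 2 * (p : ℕ) + r) 1) (min (y - 2 * (q : ℕ) + r) 1)
        - max (max (x - 2 * (p : ℕ)) (-1)) (max (y - 2 * (q : ℕ)) (-1)))
      = max 0 (r - min |x - y| (2 - |x - y|)) := by
  wlog hxy : x ≤ y generalizing x y
  · rw [Finset.sum_comm, abs_sub_comm, ← this hy hx (le_of_not_ge hxy)]
    refine Finset.sum_congr rfl fun p _ => Finset.sum_congr rfl fun q _ => ?_
    rw [min_comm, max_comm (max (x - _) _)]
  obtain ⟨hx0, hx1⟩ := hx
  obtain ⟨hy0, hy1⟩ := hy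
  simp only [Fin.sum_univ_two, Fin.val_zero, Fin.val_one, Nat.cast_zero, Nat.cast_one, mul_zero,
    mul_one, sub_zero]
  rw [abs_sub_comm, abs_of_nonneg (sub_nonneg.2 hxy), max_eq_left hx0, max_eq_left hy0,
    max_eq_right (by linarith : x - 2 ≤ -1), max_eq_right (by linarith : y - 2 ≤ -1),
    min_eq_left (by linarith : x - 2 + r ≤ 1), min_eq_left (by linarith : y - 2 + r ≤ 1),
    max_eq_right hxy, max_eq_left hx0, max_eq_right hy0, max_self,
    min_eq_left (min_le_min_right 1 (by linarith) : min (x + r) 1 ≤ min (y + r) 1),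
    min_eq_right (le_min (by linarith) (by linarith) : y - 2 + r ≤ min (x + r) 1),
    min_eq_left (le_min (by linarith) (by linarith) : x - 2 + r ≤ min (y + r) 1),
    min_eq_left (by linarith : x - 2 + r ≤ y - 2 + r),
    max_eq_left (by linarith : x - 2 + r - y ≤ 0)]
  -- The arc from `x` may wrap around: its parts in `(y, 1]` and beyond `1` add up to `x + r - y`.
  have h : max 0 (min (x + r) 1 - y) + max 0 (x - 2 + r - -1) = max 0 (x + r - y) := by grind
  have h' : max 0 (x + r - y) + max 0 (y - 2 + r - x) = max 0 (r - min (y - x) (2 - (y - x))) := by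
    grind
  linarith

/-- Truncated arc-length distances are negative definite: the constant `r` contributes nothing since
the weights sum to zero, and the rest is minus an overlap kernel. -/
lemma min_negDef {n : ℕ} (x : Fin n → Set.Icc (-1 : ℝ) 1) (α : Fin n → ℝ) (hα : ∑ i, α i = 0)
    {r : ℝ} (hr1 : r ≤ 1) :
    ∑ i, ∑ j, α i * α j *
      min (min |(x i : ℝ) - (x j : ℝ)| (2 - |(x i : ℝ) - (x j : ℝ)|)) r ≤ 0 := by
  have h := interval_overlap_psd (ι := Fin n × Fin 2)
    (fun k => max ((x k.1 : ℝ) - 2 * ((k.2 : ℕ) : ℝ)) (-1))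
    (fun k => min ((x k.1 : ℝ) - 2 * ((k.2 : ℕ) : ℝ) + r) 1) (fun k => α k.1)
  have e : ∀ i j, α i * α j *
      min (min |(x i : ℝ) - (x j : ℝ)| (2 - |(x i : ℝ) - (x j : ℝ)|)) r
      = α i * α j * r
        - ∑ p : Fin 2, ∑ q : Fin 2, α i * α j * max 0
          (min (min ((x i : ℝ) - 2 * (p : ℕ) + r) 1) (min ((x j : ℝ) - 2 * (q : ℕ) + r) 1)
          - max (max ((x i : ℝ) - 2 * (p : ℕ)) (-1)) (max ((x j : ℝ) - 2 * (q : ℕ)) (-1))) := by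
    intro i j
    simp_rw [← Finset.mul_sum]
    rw [arc_overlap (x i).2 (x j).2 hr1, ← mul_sub]
    congr 1
    grind
  simp_rw [e, Finset.sum_sub_distrib, ← Finset.sum_mul, ← Finset.mul_sum, hα]
  simp_rw [Fintype.sum_prod_type] at h
  have h2 : ∀ i, ∀ f : Fin 2 → Fin n → Fin 2 → ℝ,
      ∑ p, ∑ j, ∑ q, α i * α j * f p j q = ∑ j, α i * α j * ∑ p, ∑ q, f p j q := by
    intro i f
    rw [Finset.sum_comm]
    simp_rw [Finset.mul_sum]
  simp_rw [h2] at h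
  simp only [mul_zero, Finset.sum_const_zero, zero_mul, zero_sub]
  linarith

/-- Near `r = 0` the integrand is dominated by `r ^ (a - 1)`. -/
lemma min_mul_rpow_integrable {a t : ℝ} (ha : 0 < a) (ht : 0 ≤ t) :
    IntervalIntegrable (fun r : ℝ => min t r * r ^ (a - 2)) MeasureTheory.volume 0 1 := by
  have h : IntervalIntegrable (fun r : ℝ => r ^ (a - 1)) MeasureTheory.volume 0 1 :=
    intervalIntegral.intervalIntegrable_rpow' (by linarith)
  refine h.mono_fun (Measurable.aestronglyMeasurable (by fun_prop)) ?_
  rw [Filter.EventuallyLE, MeasureTheory.ae_restrict_iff' measurableSet_uIoc]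
  refine Filter.Eventually.of_forall fun r hr => ?_
  rw [Set.uIoc_of_le zero_le_one] at hr
  have hr0 : 0 < r := hr.1
  rw [Real.norm_of_nonneg (by positivity), Real.norm_of_nonneg (by positivity)]
  calc min t r * r ^ (a - 2) ≤ r * r ^ (a - 2) := by gcongr; exact min_le_right _ _
    _ = r ^ (a - 1) := by
      rw [show a - 1 = 1 + (a - 2) by ring, Real.rpow_add hr0, Real.rpow_one]

/-- On `[0, 1]` the power `t ^ a` is a nonnegative mixture of the truncations `min t r`, `r ≤ 1`
(the last term being the truncation at `r = 1`). -/
lemma rpow_mixture {a t : ℝ} (ha : 0 < a) (ha1 : a ≤ 1) (ht : 0 ≤ t) (ht1 : t ≤ 1) :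
    t ^ a = a * (1 - a) * (∫ r in (0 : ℝ)..1, min t r * r ^ (a - 2)) + a * t := by
  rcases ha1.eq_or_lt with rfl | ha1
  · simp
  rcases ht.eq_or_lt with rfl | ht0
  · have : ∫ r in (0 : ℝ)..1, min 0 r * r ^ (a - 2) = 0 := by
      rw [intervalIntegral.integral_congr (g := fun _ => (0 : ℝ))]
      · simp
      · intro r hr
        rw [Set.uIcc_of_le zero_le_one] at hr
        simp [hr.1]
    rw [this, Real.zero_rpow ha.ne']
    simp
  have hi := min_mul_rpow_integrable ha ht
  have h1 : ∫ r in (0 : ℝ)..t, min t r * r ^ (a - 2) = t ^ a / a := by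
    rw [intervalIntegral.integral_congr_ae (g := fun r => r ^ (a - 1)), integral_rpow]
    · simp [Real.zero_rpow ha.ne']
    · left; linarith
    · refine Filter.Eventually.of_forall fun r hr => ?_
      rw [Set.uIoc_of_le ht] at hr
      have hr0 : 0 < r := hr.1
      simp only [min_eq_right hr.2]
      rw [show a - 1 = 1 + (a - 2) by ring, Real.rpow_add hr0, Real.rpow_one]
  have h2 : ∫ r in t..(1 : ℝ), min t r * r ^ (a - 2) = t * ((1 - t ^ (a - 1)) / (a - 1)) := by
    rw [intervalIntegral.integral_congr (g := fun r => t * r ^ (a - 2)),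
      intervalIntegral.integral_const_mul, integral_rpow]
    · rw [show a - 2 + 1 = a - 1 by ring, Real.one_rpow]
    · right
      refine ⟨by linarith, fun h => ?_⟩
      rw [Set.uIcc_of_le ht1] at h
      linarith [h.1]
    · intro r hr
      rw [Set.uIcc_of_le ht1] at hr
      simp [min_eq_left hr.1]
  have hsub1 : Set.uIcc 0 t ⊆ Set.uIcc (0 : ℝ) 1 := by
    rw [Set.uIcc_of_le ht, Set.uIcc_of_le zero_le_one]; exact Set.Icc_subset_Icc_right ht1
  have hsub2 : Set.uIcc t 1 ⊆ Set.uIcc (0 : ℝ) 1 := by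
    rw [Set.uIcc_of_le ht1, Set.uIcc_of_le zero_le_one]; exact Set.Icc_subset_Icc_left ht
  rw [← intervalIntegral.integral_add_adjacent_intervals (hi.mono_set hsub1) (hi.mono_set hsub2),
    h1, h2, Real.rpow_sub_one ht0.ne']
  have : a - 1 ≠ 0 := by linarith
  field_simp
  ring

theorem circle_distance_pow_negDef (a : ℝ) (ha : 0 < a) (ha1 : a ≤ 1) :
    IsNegDefKernel (fun x y : Set.Icc (-1 : ℝ) 1 =>
      (min |(x : ℝ) - (y : ℝ)| (2 - |(x : ℝ) - (y : ℝ)|)) ^ a) := by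
  refine ⟨fun x y => by simp only [abs_sub_comm], fun x => by simp [Real.zero_rpow ha.ne'], ?_⟩
  intro n x α hα
  set d : Fin n → Fin n → ℝ := fun i j =>
    min |(x i : ℝ) - (x j : ℝ)| (2 - |(x i : ℝ) - (x j : ℝ)|) with hd
  have hd01 : ∀ i j, 0 ≤ d i j ∧ d i j ≤ 1 := by
    intro i j
    have h1 := (x i).2
    have h2 := (x j).2
    simp only [Set.mem_Icc] at h1 h2
    simp only [hd]
    grind
  have hterm : ∀ i j, IntervalIntegrable (fun r : ℝ => α i * α j * (min (d i j) r * r ^ (a - 2)))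
      MeasureTheory.volume 0 1 :=
    fun i j => (min_mul_rpow_integrable ha (hd01 i j).1).const_mul _
  have hI : ∑ i, ∑ j, α i * α j * ∫ r in (0 : ℝ)..1, min (d i j) r * r ^ (a - 2) ≤ 0 := by
    simp_rw [← intervalIntegral.integral_const_mul]
    simp_rw [← intervalIntegral.integral_finsetSum (fun j _ => hterm _ j)]
    have hsum : ∀ i, IntervalIntegrable
        (fun r : ℝ => ∑ j, α i * α j * (min (d i j) r * r ^ (a - 2))) MeasureTheory.volume 0 1 := by
      intro i
      simpa only [Finset.sum_fn] using
        IntervalIntegrable.sum Finset.univ (fun j _ => hterm i j)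
    rw [← intervalIntegral.integral_finsetSum (fun i _ => hsum i)]
    rw [← neg_nonneg, ← intervalIntegral.integral_neg]
    refine intervalIntegral.integral_nonneg zero_le_one fun r hr => ?_
    rw [neg_nonneg]
    simp_rw [← mul_assoc, ← Finset.sum_mul]
    exact mul_nonpos_of_nonpos_of_nonneg (min_negDef x α hα hr.2)
      (Real.rpow_nonneg hr.1 _)
  have h1 : ∑ i, ∑ j, α i * α j * d i j ≤ 0 := by
    have := min_negDef x α hα le_rfl
    have e : ∀ i j, min (d i j) 1 = d i j := fun i j => min_eq_left (hd01 i j).2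
    simp only [hd] at e
    simp_rw [e] at this
    exact this
  have e : ∑ i, ∑ j, α i * α j * d i j ^ a
      = a * (1 - a) * (∑ i, ∑ j, α i * α j * ∫ r in (0 : ℝ)..1, min (d i j) r * r ^ (a - 2))
        + a * ∑ i, ∑ j, α i * α j * d i j := by
    simp_rw [Finset.mul_sum, ← Finset.sum_add_distrib]
    refine Finset.sum_congr rfl fun i _ => Finset.sum_congr rfl fun j _ => ?_
    rw [rpow_mixture ha ha1 (hd01 i j).1 (hd01 i j).2]
    ring
  change ∑ i, ∑ j, α i * α j * d i j ^ a ≤ 0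
  rw [e]
  exact add_nonpos
    (mul_nonpos_of_nonneg_of_nonpos (mul_nonneg ha.le (by linarith)) hI)
    (mul_nonpos_of_nonneg_of_nonpos ha.le h1)
end

section
/- Let d ≥ 1 and let S^d denote the unit sphere in ℝ^{d+1}. The kernel K(ξ,η) := π/2 − arccos⟨ξ,η⟩ is positive definite on S^d: for every n ∈ ℕ, all ξ_1,…,ξ_n ∈ S^d and all α_1,…,α_n ∈ ℝ one has Σ_{i,j=1}^n α_i α_j (π/2 − arccos⟨ξ_i,ξ_j⟩) ≥ 0. Equivalently, the geodesic distance ρ(ξ,η) = arccos⟨ξ,η⟩ is a negative definite kernel on S^d. -/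
/-!
Since `π/2 - arccos t = arcsin t`, positive definiteness says that applying `arcsin` entrywise to
the Gram matrix `G` of finitely many unit vectors gives a positive semidefinite matrix. By the Schur
product theorem, entrywise application of a convergent power series with nonnegative coefficients
preserves positive semidefiniteness (`posSemidef_of_hasSum`). This applies to `-log (1 - x)` and to
`exp`, hence to `(1 - x) ^ (-1/2) = exp (-log (1 - x) / 2)` (`posSemidef_inv_sqrt`).

The passage to `arcsin` goes through a derivative: for a fixed vector `α`, the function
`F r = ∑ i j, α i * α j * arcsin (r * G i j)` is continuous on `[0, 1]`, vanishes at `0`, and has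
derivative `∑ i j, α i * α j * (G i j / √(1 - (r * G i j) ^ 2))` on `(0, 1)`. The latter is
nonnegative, being the quadratic form of a Hadamard product of positive semidefinite matrices, so
`F 1 ≥ 0`. Working inside `(0, 1)` avoids the singularity of the derivative of `arcsin` at `1`, attained on the diagonal of `G`.

Negative definiteness of `arccos` follows because the constant `π/2` contributes `π/2 * (∑ α i) ^ 2`,
which is zero when `∑ α i = 0`.
-/

open Finset
open scoped RealInnerProductSpace

open Matrix

lemma posSemidef_iff_sum {n : ℕ} {A : Matrix (Fin n) (Fin n) ℝ} :
    A.PosSemidef ↔ (∀ i j, A i j = A j i) ∧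
      ∀ α : Fin n → ℝ, 0 ≤ ∑ i, ∑ j, α i * α j * A i j := by
  have key : ∀ α : Fin n → ℝ, star α ⬝ᵥ (A *ᵥ α) = ∑ i, ∑ j, α i * α j * A i j := by
    intro α
    simp only [dotProduct, mulVec, Finset.mul_sum, star_trivial]
    exact Finset.sum_congr rfl fun i _ => Finset.sum_congr rfl fun j _ => by ring
  rw [posSemidef_iff_dotProduct_mulVec]
  simp only [key]
  refine and_congr_left fun _ => ?_
  rw [IsHermitian.ext_iff]
  exact ⟨fun h i j => by simpa using h j i, fun h i j => by simpa using h j i⟩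

lemma posSemidef_entrywise_pow {n : ℕ} {A : Matrix (Fin n) (Fin n) ℝ} (hA : A.PosSemidef) (k : ℕ) :
    (Matrix.of fun i j => A i j ^ k).PosSemidef := by
  induction k with
  | zero =>
    convert! posSemidef_vecMulVec_self_star (fun _ : Fin n => (1 : ℝ)) using 1
    ext i j
    simp [vecMulVec_apply]
  | succ k ih =>
    convert! ih.hadamard hA using 1

/-- Entrywise power series with nonnegative coefficients preserve positive semidefiniteness. The
`k`-th exponent is a function `e k` so that series starting at exponent `1` are covered. -/
lemma posSemidef_of_hasSum {n : ℕ} {A B : Matrix (Fin n) (Fin n) ℝ} (hA : A.PosSemidef)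
    (c : ℕ → ℝ) (hc : ∀ k, 0 ≤ c k) (e : ℕ → ℕ)
    (h : ∀ i j, HasSum (fun k => c k * A i j ^ e k) (B i j)) : B.PosSemidef := by
  rw [posSemidef_iff_sum]
  constructor
  · intro i j
    refine (h i j).unique ?_
    simpa only [(posSemidef_iff_sum.1 hA).1 i j] using h j i
  · intro α
    have hs : HasSum (fun k => ∑ i, ∑ j, α i * α j * (c k * A i j ^ e k))
        (∑ i, ∑ j, α i * α j * B i j) :=
      hasSum_sum fun i _ => hasSum_sum fun j _ => (h i j).mul_left _
    refine hs.nonneg fun k => ?_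
    have := mul_nonneg (hc k) ((posSemidef_iff_sum.1 (posSemidef_entrywise_pow hA (e k))).2 α)
    rw [Finset.mul_sum] at this
    simp only [Finset.mul_sum, of_apply] at this
    refine this.trans_eq (Finset.sum_congr rfl fun i _ => Finset.sum_congr rfl fun j _ => ?_)
    ring

lemma posSemidef_inv_sqrt {n : ℕ} {A : Matrix (Fin n) (Fin n) ℝ} (hA : A.PosSemidef)
    (h1 : ∀ i j, |A i j| < 1) :
    (Matrix.of fun i j => 1 / √(1 - A i j)).PosSemidef := by
  have hlog : (Matrix.of fun i j => -Real.log (1 - A i j)).PosSemidef := by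
    refine posSemidef_of_hasSum hA (fun k => 1 / ((k : ℝ) + 1)) (fun k => by positivity)
      (fun k => k + 1) fun i j => ?_
    convert! Real.hasSum_pow_div_log_of_abs_lt_one (h1 i j) using 2 with k
    ring
  refine posSemidef_of_hasSum hlog (fun k => (1 / 2 : ℝ) ^ k / (k.factorial : ℝ))
    (fun k => by positivity) id fun i j => ?_
  have hpos : 0 < 1 - A i j := by linarith [(abs_lt.1 (h1 i j)).2]
  have hexp := NormedSpace.expSeries_div_hasSum_exp (1 / 2 * -Real.log (1 - A i j))
  rw [← Real.exp_eq_exp_ℝ] at hexp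
  convert! hexp using 2 with k
  · rw [mul_pow, id, of_apply]
    ring
  · rw [of_apply, Real.sqrt_eq_rpow, Real.rpow_def_of_pos hpos, one_div, ← Real.exp_neg]
    ring_nf

lemma posSemidef_arcsin {n : ℕ} {G : Matrix (Fin n) (Fin n) ℝ} (hG : G.PosSemidef)
    (h1 : ∀ i j, |G i j| ≤ 1) (α : Fin n → ℝ) :
    0 ≤ ∑ i, ∑ j, α i * α j * Real.arcsin (G i j) := by
  set F : ℝ → ℝ := fun r => ∑ i, ∑ j, α i * α j * Real.arcsin (r * G i j) with hF
  have hlt : ∀ r ∈ Set.Ioo (0 : ℝ) 1, ∀ i j, |r * G i j| < 1 := by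
    intro r hr i j
    rw [abs_mul, abs_of_pos hr.1]
    nlinarith [h1 i j, hr.1, hr.2]
  have hderiv : ∀ r ∈ Set.Ioo (0 : ℝ) 1, HasDerivAt F
      (∑ i, ∑ j, α i * α j * (1 / √(1 - (r * G i j) ^ 2) * G i j)) r := by
    intro r hr
    refine HasDerivAt.fun_sum fun i _ => HasDerivAt.fun_sum fun j _ => HasDerivAt.const_mul _ ?_
    have hb := abs_lt.1 (hlt r hr i j)
    have hlin : HasDerivAt (fun s : ℝ => s * G i j) (G i j) r := by
      simpa using (hasDerivAt_id r).mul_const (G i j)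
    exact (Real.hasDerivAt_arcsin hb.1.ne' hb.2.ne).comp r hlin
  have hnonneg : ∀ r ∈ Set.Ioo (0 : ℝ) 1,
      0 ≤ ∑ i, ∑ j, α i * α j * (1 / √(1 - (r * G i j) ^ 2) * G i j) := by
    intro r hr
    have hsq : (Matrix.of fun i j => (r * G i j) ^ 2).PosSemidef :=
      posSemidef_entrywise_pow (hG.smul hr.1.le) 2
    have hinv := posSemidef_inv_sqrt hsq fun i j => by
      rw [of_apply, abs_pow]
      exact pow_lt_one₀ (abs_nonneg _) (hlt r hr i j) two_ne_zero
    simpa using (posSemidef_iff_sum.1 (hinv.hadamard hG)).2 α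
  have hcont : Continuous F := by
    refine continuous_finsetSum _ fun i _ => continuous_finsetSum _ fun j _ => ?_
    exact continuous_const.mul (Real.continuous_arcsin.comp (by fun_prop))
  have hmono : MonotoneOn F (Set.Icc 0 1) := by
    refine monotoneOn_of_deriv_nonneg (convex_Icc 0 1) hcont.continuousOn ?_ ?_ <;>
      rw [interior_Icc]
    · exact fun r hr => (hderiv r hr).differentiableAt.differentiableWithinAt
    · intro r hr
      rw [(hderiv r hr).deriv]
      exact hnonneg r hr
  have h01 := hmono (by simp) (by simp) (zero_le_one (α := ℝ))
  simpa [hF] using h01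

theorem sphere_geodesic_kernel (d : ℕ) (hd : 1 ≤ d) :
    IsPosDefKernel
      (fun ξ η : Metric.sphere (0 : EuclideanSpace ℝ (Fin (d + 1))) 1 =>
        Real.pi / 2 - Real.arccos ⟪(ξ : EuclideanSpace ℝ (Fin (d + 1))),
          (η : EuclideanSpace ℝ (Fin (d + 1)))⟫) ∧
    IsNegDefKernel
      (fun ξ η : Metric.sphere (0 : EuclideanSpace ℝ (Fin (d + 1))) 1 =>
        Real.arccos ⟪(ξ : EuclideanSpace ℝ (Fin (d + 1))),
          (η : EuclideanSpace ℝ (Fin (d + 1)))⟫) := by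
  have hpos : ∀ (n : ℕ) (x : Fin n → Metric.sphere (0 : EuclideanSpace ℝ (Fin (d + 1))) 1)
      (α : Fin n → ℝ), 0 ≤ ∑ i, ∑ j, α i * α j *
        (Real.pi / 2 - Real.arccos ⟪(x i : EuclideanSpace ℝ (Fin (d + 1))),
          (x j : EuclideanSpace ℝ (Fin (d + 1)))⟫) := by
    intro n x α
    have h := posSemidef_arcsin
      (posSemidef_gram ℝ fun i => (x i : EuclideanSpace ℝ (Fin (d + 1)))) (fun i j => by
        simpa using abs_real_inner_le_norm (x i : EuclideanSpace ℝ (Fin (d + 1))) (x j)) α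
    simpa only [Real.arcsin_eq_pi_div_two_sub_arccos, gram_apply] using h
  refine ⟨⟨fun x y => ?_, hpos⟩, fun x y => ?_, fun x => ?_, fun n x α hα => ?_⟩
  · simp only [real_inner_comm]
  · simp only [real_inner_comm]
  · simp
  · have h := hpos n x α
    have hzero : ∑ i, ∑ j, α i * α j * (Real.pi / 2) = 0 := by
      simp_rw [← Finset.sum_mul, ← Finset.mul_sum, hα]
      simp
    simp only [mul_sub, Finset.sum_sub_distrib] at h
    linarith
end
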